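/- arXiv:2312.01159 — 2 statements merged into one kernel-verified Lean document; each statement's English description precedes it below -/
import Mathlib

section
/- For every 4-coloring f of [58] = {1,...,58} there exist two integers of the same color that are a perfect square apart; that is, there exist a ∈ [58] and a positive integer d with a + d² ≤ 58 and f(a) = f(a + d²). -/
/-- Bit `64 + j` is set iff `|j|` is not one of `1, 4, 9, 16, 25, 36, 49`. -/
def vsK : ℕ :=
  (2 ^ 129 - 1) ^^^ (2 ^ 65 ||| 2 ^ 68 ||| 2 ^ 73 ||| 2 ^ 80 ||| 2 ^ 89 ||| 2 ^ 100 ||| 2 ^ 113 |||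
    2 ^ 63 ||| 2 ^ 60 ||| 2 ^ 55 ||| 2 ^ 48 ||| 2 ^ 39 ||| 2 ^ 28 ||| 2 ^ 15)

/-- Mask of the numbers that are not a square apart from `v`. -/
def vsM (v : ℕ) : ℕ := vsK >>> (64 - v)

/-- Evaluates `x` before passing it on, which keeps kernel evaluation of the search fast. -/
def vsForce (x : ℕ) (k : ℕ → Bool) : Bool :=
  Nat.rec (k 0) (fun n _ => k (Nat.succ n)) x

theorem vsForce_eq (x : ℕ) (k : ℕ → Bool) : vsForce x k = k x := by
  cases x <;> rfl

/-- Branching heuristic: a vertex of `U` with the fewest available colors. -/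
def vsPick (a b c d U : ℕ) : ℕ :=
  let one := Nat.xor U (Nat.land U (Nat.lor (Nat.lor (Nat.land a b) (Nat.land c d))
    (Nat.land (Nat.lor a b) (Nat.lor c d))))
  bif Nat.beq (Nat.land U (Nat.lor (Nat.lor a b) (Nat.lor c d))) U then
  bif Nat.beq one 0 then
    let two := Nat.xor U (Nat.land U (Nat.lor (Nat.land (Nat.land a b) (Nat.lor c d))
      (Nat.land (Nat.lor a b) (Nat.land c d))))
    bif Nat.beq two 0 then Nat.log2 U else Nat.log2 two
  else Nat.log2 one
  else Nat.log2 (Nat.xor U (Nat.land U (Nat.lor (Nat.lor a b) (Nat.lor c d))))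

/-- `Nat.testBit` in a form that evaluates quickly in the kernel. -/
def vsBit (m v : ℕ) : Bool := Nat.beq (Nat.land 1 (Nat.shiftRight m v)) 1

theorem vsBit_eq (m v : ℕ) : vsBit m v = m.testBit v := by
  change Nat.beq (1 &&& (m >>> v)) 1 = (1 &&& (m >>> v) != 0)
  rw [Nat.one_and_eq_mod_two]
  rcases Nat.mod_two_eq_zero_or_one (m >>> v) with h | h <;> rw [h] <;> rfl

/-- Backtracking search: `true` certifies that no valid coloring of `U` exists in which the
`i`-th color is used only inside the `i`-th of the masks `a, b, c, d`. -/
def vsSearch : ℕ → ℕ → ℕ → ℕ → ℕ → ℕ → Bool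
  | 0, _, _, _, _, _ => false
  | n + 1, a, b, c, d, U =>
    vsForce (vsPick a b c d U) fun v =>
    vsForce (vsM v) fun m =>
    vsForce (Nat.xor U (Nat.pow 2 v)) fun V =>
    vsBit U v &&
    ((!vsBit a v || vsForce (Nat.land a m) fun x => vsSearch n x b c d V) &&
    ((!vsBit b v || vsForce (Nat.land b m) fun x => vsSearch n a x c d V) &&
    ((!vsBit c v || vsForce (Nat.land c m) fun x => vsSearch n a b x d V) &&
    (!vsBit d v || vsForce (Nat.land d m) fun x => vsSearch n a b c x V))))

theorem vsSearch_sound (g : ℕ → Fin 4)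
    (H : ∀ v w, v < 58 → w < 58 → g v = g w → (vsM v).testBit w = true) :
    ∀ (n a b c d U : ℕ), vsSearch n a b c d U = true →
      (∀ w, U.testBit w = true → w < 58) →
      (∀ w, U.testBit w = true → g w = 0 → a.testBit w = true) →
      (∀ w, U.testBit w = true → g w = 1 → b.testBit w = true) →
      (∀ w, U.testBit w = true → g w = 2 → c.testBit w = true) →
      (∀ w, U.testBit w = true → g w = 3 → d.testBit w = true) → False := by
  intro n
  induction n with
  | zero => intro a b c d U h; simp [vsSearch] at h
  | succ n ih =>
    intro a b c d U h hU ha hb hc hd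
    simp only [vsSearch, vsForce_eq, vsBit_eq] at h
    generalize vsPick a b c d U = v at h
    change (_ && ((_ || vsSearch n (a &&& vsM v) b c d (U ^^^ 2 ^ v)) &&
      ((_ || vsSearch n a (b &&& vsM v) c d (U ^^^ 2 ^ v)) &&
      ((_ || vsSearch n a b (c &&& vsM v) d (U ^^^ 2 ^ v)) &&
      (_ || vsSearch n a b c (d &&& vsM v) (U ^^^ 2 ^ v)))))) = true at h
    simp only [Bool.and_eq_true, Bool.or_eq_true, Bool.not_eq_true'] at h
    obtain ⟨hv, h0, h1, h2, h3⟩ := h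
    have hv58 := hU v hv
    have sub : ∀ w, (U ^^^ 2 ^ v).testBit w = true → U.testBit w = true := by
      intro w hw
      by_cases e : v = w
      · rw [← e]; exact hv
      · simpa [Nat.testBit_xor, Nat.testBit_two_pow, e] using hw
    have key : ∀ (k : Fin 4) (x : ℕ), g v = k →
        (∀ w, U.testBit w = true → g w = k → x.testBit w = true) →
        ∀ w, (U ^^^ 2 ^ v).testBit w = true → g w = k → (x &&& vsM v).testBit w = true := by
      intro k x hk hx w hw hgw
      rw [Nat.testBit_and, hx w (sub w hw) hgw, H v w hv58 (hU w (sub w hw)) (hk.trans hgw.symm)]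
      rfl
    have hU' := fun w hw => hU w (sub w hw)
    have ha' := fun w hw => ha w (sub w hw)
    have hb' := fun w hw => hb w (sub w hw)
    have hc' := fun w hw => hc w (sub w hw)
    have hd' := fun w hw => hd w (sub w hw)
    have hcase : g v = 0 ∨ g v = 1 ∨ g v = 2 ∨ g v = 3 := by
      generalize g v = k
      revert k
      decide
    rcases hcase with e | e | e | e
    · rcases h0 with h | h
      · simp [ha v hv e] at h
      · exact ih _ _ _ _ _ h hU' (key 0 a e ha) hb' hc' hd'
    · rcases h1 with h | h
      · simp [hb v hv e] at h
      · exact ih _ _ _ _ _ h hU' ha' (key 1 b e hb) hc' hd'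
    · rcases h2 with h | h
      · simp [hc v hv e] at h
      · exact ih _ _ _ _ _ h hU' ha' hb' (key 2 c e hc) hd'
    · rcases h3 with h | h
      · simp [hd v hv e] at h
      · exact ih _ _ _ _ _ h hU' ha' hb' hc' (key 3 d e hd)

theorem vsM_spec : ∀ v < 58, ∀ w < 58, (vsM v).testBit w = true ∨
    (∃ d < 8, 1 ≤ d ∧ w = v + d ^ 2) ∨ (∃ d < 8, 1 ≤ d ∧ v = w + d ^ 2) := by
  decide +kernel

/-- The search succeeds once `0, 9, 25` have received the colors `0, 1, 2`. -/
theorem vsSearch_run : vsSearch 60 (vsM 0) (vsM 9) (vsM 25) (2 ^ 58 - 1)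
    ((2 ^ 58 - 1) ^^^ (2 ^ 0 ||| 2 ^ 9 ||| 2 ^ 25)) = true := by
  decide +kernel

theorem vs_perm : ∀ x y z : Fin 4, x ≠ y → x ≠ z → y ≠ z →
    ∃ s : Equiv.Perm (Fin 4), s x = 0 ∧ s y = 1 ∧ s z = 2 := by
  decide +kernel

/-- Upper-bound half of `R₄(VS) = 58`: every 4-coloring of `[58]` contains two
same-colored integers a perfect square apart. -/
theorem R4VS_upper (f : ℕ → Fin 4) :
    ∃ a d : ℕ, 1 ≤ a ∧ 1 ≤ d ∧ a + d ^ 2 ≤ 58 ∧ f a = f (a + d ^ 2) := by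
  by_contra hcon
  have hne : ∀ a d : ℕ, 1 ≤ a → 1 ≤ d → a + d ^ 2 ≤ 58 → f a ≠ f (a + d ^ 2) :=
    fun a d h1 h2 h3 h4 => hcon ⟨a, d, h1, h2, h3, h4⟩
  obtain ⟨s, s0, s1, s2⟩ := vs_perm (f 1) (f 10) (f 26)
    (hne 1 3 (by norm_num) (by norm_num) (by norm_num))
    (hne 1 5 (by norm_num) (by norm_num) (by norm_num))
    (hne 10 4 (by norm_num) (by norm_num) (by norm_num))
  have H : ∀ v w, v < 58 → w < 58 → s (f (v + 1)) = s (f (w + 1)) →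
      (vsM v).testBit w = true := by
    intro v w hv hw h
    have h' := s.injective h
    rcases vsM_spec v hv w hw with h1 | ⟨d, _, hd, e⟩ | ⟨d, _, hd, e⟩
    · exact h1
    · refine absurd ?_ (hne (v + 1) d (by omega) hd (by omega))
      rw [h', e]; congr 1; omega
    · refine absurd ?_ (hne (w + 1) d (by omega) hd (by omega))
      rw [← h', e]; congr 1; omega
  have hlt : ∀ w, ((2 ^ 58 - 1) ^^^ (2 ^ 0 ||| 2 ^ 9 ||| 2 ^ 25) : ℕ).testBit w = true →
      w < 58 := by
    intro w hw
    by_contra hge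
    rw [Nat.testBit_lt_two_pow] at hw
    · exact absurd hw (by decide)
    · exact lt_of_lt_of_le (by decide) (Nat.pow_le_pow_right (by norm_num) (not_lt.mp hge))
  refine vsSearch_sound (fun i => s (f (i + 1))) H _ _ _ _ _ _ vsSearch_run hlt ?_ ?_ ?_ ?_
  · intro w hw hg
    exact H 0 w (by norm_num) (hlt w hw) (s0.trans hg.symm)
  · intro w hw hg
    exact H 9 w (by norm_num) (hlt w hw) (s1.trans hg.symm)
  · intro w hw hg
    exact H 25 w (by norm_num) (hlt w hw) (s2.trans hg.symm)
  · intro w hw _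
    rw [Nat.testBit_two_pow_sub_one]
    exact decide_eq_true (hlt w hw)
end

section
/- There exists a 6-coloring f of [333] = {1,...,333} with no two integers of the same color a perfect square apart; that is, there are no a ∈ [333] and positive integer d with a + d² ≤ 333 and f(a) = f(a + d²). Consequently R_6(VS) > 333. -/
/-- One period (length 40) of the coloring. -/
def vsPeriod : List (Fin 6) :=
  [4, 1, 3, 5, 0, 2, 4, 1, 2, 5, 0, 2, 4, 1, 5, 0, 2, 4, 1, 2, 5, 0, 2, 4, 1, 3, 5, 0, 3, 4, 1, 3, 5, 0, 4, 1, 3, 5, 0, 3]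

/-- The coloring, periodic with period 40. -/
def vsColor (n : ℕ) : Fin 6 := vsPeriod.getD (n % 40) 0

set_option maxRecDepth 100000 in
lemma vsColor_check : ∀ d : Fin 19, 1 ≤ d.val → ∀ r : Fin 40,
    vsPeriod.getD r.val 0 ≠ vsPeriod.getD ((r.val + d.val ^ 2) % 40) 0 := by
  decide +kernel

/-- `R₆(VS) > 333`: there is a 6-coloring of `[333]` with no two same-colored
integers a perfect square apart. -/
theorem R6VS_gt_333 :
    ∃ f : ℕ → Fin 6,
      ¬ ∃ a d : ℕ, 1 ≤ a ∧ 1 ≤ d ∧ a + d ^ 2 ≤ 333 ∧ f a = f (a + d ^ 2) := by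
  refine ⟨vsColor, ?_⟩
  rintro ⟨a, d, ha, hd, hle, heq⟩
  have hd' : d < 19 := by nlinarith
  have h := vsColor_check ⟨d, hd'⟩ hd ⟨a % 40, Nat.mod_lt _ (by norm_num)⟩
  apply h
  simpa [vsColor, Nat.mod_add_mod] using heq
end
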